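/- Secrecy-leakage converse bound (middle/large key regime): under the converse setup, I(X̃^n; W | Z^n) ≥ Σ_{i=1}^n I(V_i; X̃_i | Z_i). -/

import Mathlib

open MeasureTheory

noncomputable section

/-- Probability mass `P[X = x]` of a finitely-valued random variable `X` on `(Ω, μ)`. -/
def pmass {Ω : Type*} [MeasurableSpace Ω] (μ : Measure Ω) {α : Type*}
    (X : Ω → α) (x : α) : ℝ :=
  (μ (X ⁻¹' {x})).toReal

/-- Shannon entropy `H(X)` (in nats) of a finitely-valued random variable. -/
def entropyRV {Ω : Type*} [MeasurableSpace Ω] (μ : Measure Ω) {α : Type*} [Fintype α]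
    (X : Ω → α) : ℝ :=
  ∑ x : α, Real.negMulLog (pmass μ X x)

/-- Conditional Shannon entropy `H(X | Y)`. -/
def condEntropyRV {Ω : Type*} [MeasurableSpace Ω] (μ : Measure Ω) {α β : Type*}
    [Fintype α] [Fintype β] (X : Ω → α) (Y : Ω → β) : ℝ :=
  entropyRV μ (fun ω => (X ω, Y ω)) - entropyRV μ Y

/-- Mutual information `I(X;Y)`. -/
def mutualInfoRV {Ω : Type*} [MeasurableSpace Ω] (μ : Measure Ω) {α β : Type*}
    [Fintype α] [Fintype β] (X : Ω → α) (Y : Ω → β) : ℝ :=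
  entropyRV μ X + entropyRV μ Y - entropyRV μ (fun ω => (X ω, Y ω))

/-- Conditional mutual information `I(X;Y|Z)`. -/
def condMutualInfoRV {Ω : Type*} [MeasurableSpace Ω] (μ : Measure Ω) {α β γ : Type*}
    [Fintype α] [Fintype β] [Fintype γ] (X : Ω → α) (Y : Ω → β) (Z : Ω → γ) : ℝ :=
  entropyRV μ (fun ω => (X ω, Z ω)) + entropyRV μ (fun ω => (Y ω, Z ω))
    - entropyRV μ Z - entropyRV μ (fun ω => (X ω, Y ω, Z ω))

/-- Expected value `E[f(X)]` of a function of a finitely-valued random variable. -/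
def expVal {Ω : Type*} [MeasurableSpace Ω] (μ : Measure Ω) {α : Type*} [Fintype α]
    (X : Ω → α) (f : α → ℝ) : ℝ :=
  ∑ a : α, pmass μ X a * f a

/-- Independence of two finitely-valued random variables, via their joint mass. -/
def IndepRV {Ω : Type*} [MeasurableSpace Ω] (μ : Measure Ω) {α β : Type*}
    (X : Ω → α) (Y : Ω → β) : Prop :=
  ∀ a b, pmass μ (fun ω => (X ω, Y ω)) (a, b) = pmass μ X a * pmass μ Y b

/-- Conditional independence of `A` and `C` given `B` (the Markov chain `A − B − C`)
for finitely-valued random variables, via joint masses. -/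
def CondIndepRV {Ω : Type*} [MeasurableSpace Ω] (μ : Measure Ω) {α β γ : Type*}
    (A : Ω → α) (B : Ω → β) (C : Ω → γ) : Prop :=
  ∀ a b c,
    pmass μ (fun ω => (A ω, B ω, C ω)) (a, b, c) * pmass μ B b
      = pmass μ (fun ω => (A ω, B ω)) (a, b) * pmass μ (fun ω => (B ω, C ω)) (b, c)

/-- `X` is uniformly distributed on its (finite) alphabet. -/
def UniformRV {Ω : Type*} [MeasurableSpace Ω] (μ : Measure Ω) {α : Type*} [Fintype α]
    (X : Ω → α) : Prop :=
  ∀ x, pmass μ X x = 1 / (Fintype.card α : ℝ)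

/-- The sequence `S = (S_1, …, S_n)` is i.i.d. with single-letter pmf `p`. -/
def HasIIDLaw {Ω : Type*} [MeasurableSpace Ω] (μ : Measure Ω) {α : Type*} {n : ℕ}
    (S : Ω → Fin n → α) (p : α → ℝ) : Prop :=
  ∀ v : Fin n → α, pmass μ S v = ∏ i, p (v i)

/-- `[a]⁻ = min {a, 0}`. -/
def negPartR (a : ℝ) : ℝ := min a 0

/-- entropy of a function of the master variable -/
def HH {Ω E α : Type} [MeasurableSpace Ω] (μ : Measure Ω) (T : Ω → E) [Fintype α]
    (f : E → α) : ℝ := entropyRV μ (fun ω => f (T ω))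

section helpers
variable {Ω E : Type} [MeasurableSpace Ω] {μ : Measure Ω} [IsProbabilityMeasure μ]
  {T : Ω → E} [Fintype E] 

lemma pmass_nonneg' {α : Type} (X : Ω → α) (x : α) : 0 ≤ pmass μ X x := ENNReal.toReal_nonneg

lemma pmass_comp (hT : ∀ s : Set E, MeasurableSet (T ⁻¹' s)) {α : Type} [DecidableEq α]
    (f : E → α) (x : α) :
    pmass μ (fun ω => f (T ω)) x = ∑ t, if f t = x then pmass μ T t else 0 := by
  classical
  rw [← Finset.sum_filter]
  unfold pmass
  rw [← ENNReal.toReal_sum (fun _ _ => measure_ne_top _ _)]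
  congr 1
  rw [← measure_biUnion_finset]
  · congr 1
    ext ω
    simp
  · intro a _ b _ hab
    apply Set.disjoint_left.2
    intro ω h1 h2
    simp at h1 h2
    exact hab (h1 ▸ h2)
  · intro b _
    exact hT _

lemma pmass_le_of_det {α β : Type} (f : E → α) (g : E → β)
    (h : ∀ s t, f s = f t → g s = g t) (t : E) :
    pmass μ (fun ω => f (T ω)) (f t) ≤ pmass μ (fun ω => g (T ω)) (g t) := by
  unfold pmass
  apply ENNReal.toReal_mono (measure_ne_top _ _)
  apply measure_mono
  intro ω hω
  exact h _ _ hω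

lemma expc (hT : ∀ s : Set E, MeasurableSet (T ⁻¹' s)) {α : Type} [Fintype α]
    (f : E → α) (g : α → ℝ) :
    ∑ x, pmass μ (fun ω => f (T ω)) x * g x = ∑ t, pmass μ T t * g (f t) := by
  classical
  simp_rw [pmass_comp hT f, Finset.sum_mul]
  rw [Finset.sum_comm]
  apply Finset.sum_congr rfl
  intro t _
  simp [ite_mul]

lemma HH_eq (hT : ∀ s : Set E, MeasurableSet (T ⁻¹' s)) {α : Type} [Fintype α]
    (f : E → α) :
    HH μ T f = ∑ t, pmass μ T t * (-Real.log (pmass μ (fun ω => f (T ω)) (f t))) := by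
  rw [← expc hT f (fun x => -Real.log (pmass μ (fun ω => f (T ω)) x))]
  unfold HH entropyRV Real.negMulLog
  apply Finset.sum_congr rfl
  intros; ring

lemma pm_sum (hT : ∀ s : Set E, MeasurableSet (T ⁻¹' s)) : ∑ t, pmass μ T t = 1 := by
  have h := pmass_comp (μ := μ) hT (fun _ => ()) ()
  simp only [if_true] at h
  rw [← h]
  unfold pmass
  have : (fun ω : Ω => ()) ⁻¹' {()} = Set.univ := by ext; simp
  rw [this]; simp

lemma HH_mono (hT : ∀ s : Set E, MeasurableSet (T ⁻¹' s)) {α β : Type} [Fintype α] [Fintype β]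
    (f : E → α) (g : E → β) (h : ∀ s t, f s = f t → g s = g t) :
    HH μ T g ≤ HH μ T f := by
  rw [HH_eq hT, HH_eq hT]
  apply Finset.sum_le_sum
  intro t _
  rcases (pmass_nonneg' (μ := μ) T t).eq_or_lt with h0 | h0
  · rw [← h0]; simp
  · have h1 : pmass μ T t ≤ pmass μ (fun ω => f (T ω)) (f t) :=
      pmass_le_of_det (T := T) (fun x => x) f (by intro s t h; rw [h]) t
    have h2 := pmass_le_of_det (μ := μ) (T := T) f g h t
    apply mul_le_mul_of_nonneg_left _ h0.le
    apply neg_le_neg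
    exact Real.log_le_log (by linarith) h2

lemma HH_congr (hT : ∀ s : Set E, MeasurableSet (T ⁻¹' s)) {α β : Type} [Fintype α] [Fintype β]
    (f : E → α) (g : E → β) (h : ∀ s t, f s = f t ↔ g s = g t) :
    HH μ T f = HH μ T g :=
  le_antisymm (HH_mono hT _ _ fun s t => (h s t).2) (HH_mono hT _ _ fun s t => (h s t).1)

lemma HH_submod3 (hT : ∀ s : Set E, MeasurableSet (T ⁻¹' s)) {α β γ : Type}
    [Fintype α] [Fintype β] [Fintype γ] (A : E → α) (B : E → β) (C : E → γ) :
    HH μ T C + HH μ T (fun t => (A t, B t, C t)) ≤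
      HH μ T (fun t => (A t, C t)) + HH μ T (fun t => (B t, C t)) := by
  classical
  set U : E → α × β × γ := fun t => (A t, B t, C t) with hU
  set q := pmass μ T with hq
  set pU := pmass μ (fun ω => U (T ω)) with hpU
  set pA := pmass μ (fun ω => (A (T ω), C (T ω))) with hpA
  set pB := pmass μ (fun ω => (B (T ω), C (T ω))) with hpB
  set pC := pmass μ (fun ω => C (T ω)) with hpC
  have key : ∑ t, q t * (pA (A t, C t) * pB (B t, C t) / (pC (C t) * pU (U t))) ≤ 1 := by
    have e := expc (μ := μ) hT U (fun x => pA (x.1, x.2.2) * pB (x.2.1, x.2.2) / (pC x.2.2 * pU x))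
    rw [← e]
    calc _ ≤ ∑ x : α × β × γ, pA (x.1, x.2.2) * pB (x.2.1, x.2.2) / pC x.2.2 := by
          apply Finset.sum_le_sum
          intro x _
          change pU x * _ ≤ _
          by_cases h0 : pU x = 0
          · rw [h0, zero_mul]
            exact div_nonneg (mul_nonneg (pmass_nonneg' _ _) (pmass_nonneg' _ _)) (pmass_nonneg' _ _)
          · apply le_of_eq
            by_cases h1 : pC x.2.2 = 0
            · simp [h1]
            · field_simp
      _ = ∑ c, pC c * pC c / pC c := by
          rw [Fintype.sum_prod_type]
          simp_rw [Fintype.sum_prod_type]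
          have : ∀ a : α, ∑ b : β, ∑ c : γ, pA (a, c) * pB (b, c) / pC c
            = ∑ c : γ, ∑ b : β, pA (a, c) * pB (b, c) / pC c := fun a => Finset.sum_comm
          simp_rw [this]
          rw [Finset.sum_comm]
          apply Finset.sum_congr rfl
          intro c _
          simp_rw [← Finset.sum_div, ← Finset.mul_sum, ← Finset.sum_mul]
          have ha : ∑ a, pA (a, c) = pC c := by
            have := expc (μ := μ) hT (fun t => (A t, C t)) (fun x => if x.2 = c then 1 else 0)
            rw [hpC, pmass_comp hT C]
            simp only [mul_ite, mul_one, mul_zero] at this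
            rw [← this, Fintype.sum_prod_type]
            simp [hpA]
          have hb : ∑ a, pB (a, c) = pC c := by
            have := expc (μ := μ) hT (fun t => (B t, C t)) (fun x => if x.2 = c then 1 else 0)
            rw [hpC, pmass_comp hT C]
            simp only [mul_ite, mul_one, mul_zero] at this
            rw [← this, Fintype.sum_prod_type]
            simp [hpB]
          rw [ha, hb]
      _ = ∑ c, pC c := by
          apply Finset.sum_congr rfl
          intro c _
          exact mul_self_div_self _
      _ = 1 := by
          have := expc (μ := μ) hT C (fun _ => 1)
          simp only [mul_one] at this
          rw [pm_sum hT] at this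
          exact this
  rw [HH_eq hT, HH_eq hT, HH_eq hT, HH_eq hT]
  rw [← sub_nonpos, ← Finset.sum_add_distrib, ← Finset.sum_add_distrib, ← Finset.sum_sub_distrib]
  have : ∑ t, (q t * (pA (A t, C t) * pB (B t, C t) / (pC (C t) * pU (U t))) - q t) ≤ 0 := by
    rw [Finset.sum_sub_distrib, pm_sum hT]; linarith
  refine le_trans (Finset.sum_le_sum ?_) this
  intro t _
  rcases (pmass_nonneg' (μ := μ) T t).eq_or_lt with h0 | h0
  · rw [hq, ← h0]; simp
  · have h1 : 0 < pU (U t) := h0.trans_le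
      (pmass_le_of_det (T := T) (fun x => x) U (by intro s t h; rw [h]) t)
    have h2 : 0 < pA (A t, C t) := h0.trans_le
      (pmass_le_of_det (T := T) (fun x => x) (fun t => (A t, C t)) (by intro s t h; rw [h]) t)
    have h3 : 0 < pB (B t, C t) := h0.trans_le
      (pmass_le_of_det (T := T) (fun x => x) (fun t => (B t, C t)) (by intro s t h; rw [h]) t)
    have h4 : 0 < pC (C t) := h0.trans_le
      (pmass_le_of_det (T := T) (fun x => x) C (by intro s t h; rw [h]) t)
    have hl := Real.log_le_sub_one_of_pos (show 0 < pA (A t, C t) * pB (B t, C t) / (pC (C t) * pU (U t)) by positivity)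
    rw [Real.log_div (by positivity) (by positivity), Real.log_mul h2.ne' h3.ne',
      Real.log_mul h4.ne' h1.ne'] at hl
    have := mul_le_mul_of_nonneg_left hl h0.le
    change q t * -Real.log (pC (C t)) + q t * -Real.log (pU (U t)) -
      (q t * -Real.log (pA (A t, C t)) + q t * -Real.log (pB (B t, C t))) ≤ _
    change q t * _ ≤ q t * _ at this
    linarith

lemma HH_sub (hT : ∀ s : Set E, MeasurableSet (T ⁻¹' s)) {α β γ δ : Type}
    [Fintype α] [Fintype β] [Fintype γ] [Fintype δ] 
    (P : E → α) (Q : E → β) (R : E → γ) (U : E → δ)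
    (h1 : ∀ s t, P s = P t → R s = R t) (h2 : ∀ s t, Q s = Q t → R s = R t)
    (h3 : ∀ s t, P s = P t → Q s = Q t → U s = U t) :
    HH μ T R + HH μ T U ≤ HH μ T P + HH μ T Q := by
  have a := HH_submod3 (μ := μ) hT P Q R
  have b := HH_mono (μ := μ) hT P (fun t => (P t, R t)) (by
    intro s t h; simp [h, h1 s t h])
  have c := HH_mono (μ := μ) hT Q (fun t => (Q t, R t)) (by
    intro s t h; simp [h, h2 s t h])
  have d := HH_mono (μ := μ) hT (fun t => (P t, Q t, R t)) U (by
    intro s t h; simp at h; exact h3 s t h.1 h.2.1)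
  linarith

lemma HH_subadd (hT : ∀ s : Set E, MeasurableSet (T ⁻¹' s)) {α β δ : Type}
    [Fintype α] [Fintype β] [Fintype δ] 
    (P : E → α) (Q : E → β) (U : E → δ)
    (h3 : ∀ s t, P s = P t → Q s = Q t → U s = U t) :
    HH μ T U ≤ HH μ T P + HH μ T Q := by
  have := HH_sub (μ := μ) hT P Q (fun _ => ()) U (by simp) (by simp) h3
  have h0 : HH μ T (fun _ => ()) = 0 := by
    rw [HH_eq hT]
    have : pmass μ (fun ω : Ω => ()) () = 1 := by
      unfold pmass
      have : (fun ω : Ω => ()) ⁻¹' {()} = Set.univ := by ext; simp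
      rw [this]; simp
    simp [this]
  linarith

/-- entropic independence passes to functions -/
lemma HH_indep (hT : ∀ s : Set E, MeasurableSet (T ⁻¹' s)) {α β α' β' γ δ : Type}
    [Fintype α] [Fintype β] [Fintype α'] [Fintype β'] [Fintype γ] [Fintype δ]
    (P : E → α) (Q : E → β) (P' : E → α') (Q' : E → β') (J : E → γ) (J' : E → δ)
    (hJ : HH μ T P + HH μ T Q ≤ HH μ T J)
    (hJ1 : ∀ s t, P s = P t → Q s = Q t → J s = J t)
    (hP : ∀ s t, P s = P t → P' s = P' t) (hQ : ∀ s t, Q s = Q t → Q' s = Q' t)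
    (hJ2 : ∀ s t, J' s = J' t → P' s = P' t) (hJ3 : ∀ s t, J' s = J' t → Q' s = Q' t)  :
    HH μ T P' + HH μ T Q' ≤ HH μ T J' := by
  have a := HH_sub (μ := μ) hT (fun t => (P' t, Q t)) P P' J
    (by intro s t h; simp at h; exact h.1) hP
    (by intro s t h; simp at h; intro h'; exact hJ1 _ _ h' h.2)
  have b := HH_sub (μ := μ) hT J' Q Q' (fun t => (P' t, Q t)) hJ3 hQ
    (by intro s t h h'; simp [hJ2 s t h, h'])
  linarith

end helpers

/-- entropy of an iid sequence -/
lemma HH_iid {Ω α : Type} [MeasurableSpace Ω] {μ : Measure Ω} [IsProbabilityMeasure μ]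
    [Fintype α] {n : ℕ}
    {S : Ω → Fin n → α} (hS : ∀ s : Set (Fin n → α), MeasurableSet (S ⁻¹' s))
    (p : α → ℝ) (h1 : ∑ a, p a = 1)
    (h : HasIIDLaw μ S p) :
    entropyRV μ S = ∑ i, entropyRV μ (fun ω => S ω i) := by
  classical
  have key : ∀ (i : Fin n) (g : α → ℝ), ∑ v : Fin n → α, pmass μ S v * g (v i) = ∑ a, p a * g a := by
    intro i g
    have : ∀ v : Fin n → α, pmass μ S v * g (v i)
        = ∏ j, (p (v j) * if j = i then g (v j) else 1) := by
      intro v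
      rw [Finset.prod_mul_distrib, h v]
      simp
    simp_rw [this]
    have := Finset.prod_univ_sum (fun _ : Fin n => (Finset.univ : Finset α))
      (fun j a => p a * if j = i then g a else 1)
    rw [Fintype.piFinset_univ] at this
    rw [← this, Finset.prod_eq_single i]
    · simp
    · intro j _ hj
      simp [hj, h1]
    · simp
  have hm : ∀ i a, pmass μ (fun ω => S ω i) a = p a := by
    intro i a
    have := pmass_comp (μ := μ) hS (fun v => v i) a
    rw [this]
    have := key i (fun x => if x = a then 1 else 0)
    simpa using this
  have e1 : ∀ i, entropyRV μ (fun ω => S ω i) = ∑ v : Fin n → α, pmass μ S v * (-Real.log (p (v i))) := by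
    intro i
    rw [key i (fun a => -Real.log (p a))]
    unfold entropyRV Real.negMulLog
    simp_rw [hm]
    apply Finset.sum_congr rfl; intros; ring
  simp_rw [e1]
  rw [Finset.sum_comm]
  unfold entropyRV
  apply Finset.sum_congr rfl
  intro v _
  unfold Real.negMulLog
  by_cases h0 : pmass μ S v = 0
  · simp [h0]
  · rw [← Finset.mul_sum]
    have : Real.log (pmass μ S v) = ∑ i, Real.log (p (v i)) := by
      rw [h v, Real.log_prod]
      intro i _ hi
      apply h0
      rw [h v]
      exact Finset.prod_eq_zero (Finset.mem_univ i) hi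
    rw [this, Finset.sum_neg_distrib]; ring

lemma ent_indep {Ω α β : Type} [MeasurableSpace Ω] {μ : Measure Ω}
    [IsProbabilityMeasure μ] [Fintype α] [Fintype β] {X : Ω → α} {Y : Ω → β}
    (hX : ∀ s : Set α, MeasurableSet (X ⁻¹' s)) (hY : ∀ s : Set β, MeasurableSet (Y ⁻¹' s))
    (h : IndepRV μ X Y) :
    entropyRV μ (fun ω => (X ω, Y ω)) = entropyRV μ X + entropyRV μ Y := by
  unfold entropyRV
  rw [Fintype.sum_prod_type]
  have : ∀ a b, pmass μ (fun ω => (X ω, Y ω)) (a, b) = pmass μ X a * pmass μ Y b := h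
  simp_rw [this, Real.negMulLog_mul, Finset.sum_add_distrib, ← Finset.sum_mul, ← Finset.mul_sum,
    ← Finset.sum_mul]
  rw [pm_sum hX, pm_sum hY]; ring

lemma HH_subadd_fin {Ω E ι α : Type} [MeasurableSpace Ω] {μ : Measure Ω} [IsProbabilityMeasure μ]
    {T : Ω → E} [Fintype E] (hT : ∀ s : Set E, MeasurableSet (T ⁻¹' s)) [Fintype α] [Fintype ι]
    [DecidableEq ι] (c : E → ι → α) (s : Finset ι) :
    HH μ T (fun t (j : {j // j ∈ s}) => c t j.1) ≤ ∑ j ∈ s, HH μ T (fun t => c t j) := by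
  induction s using Finset.induction_on with
  | empty =>
    have := HH_subadd (μ := μ) hT (fun _ => ()) (fun _ => ())
      (fun t (j : {j // j ∈ (∅ : Finset ι)}) => c t j.1)
      (by intro s t _ _; funext j; exact absurd j.2 (Finset.notMem_empty _))
    have h0 : HH μ T (fun _ => ()) = 0 := by
      rw [HH_eq hT]
      have : pmass μ (fun ω : Ω => ()) () = 1 := by
        unfold pmass
        have : (fun ω : Ω => ()) ⁻¹' {()} = Set.univ := by ext; simp
        rw [this]; simp
      simp [this]
    simp only [Finset.sum_empty]
    linarith
  | insert a s ha ih =>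
    rw [Finset.sum_insert ha]
    have := HH_subadd (μ := μ) hT (fun t => c t a) (fun t (j : {j // j ∈ s}) => c t j.1)
      (fun t (j : {j // j ∈ insert a s}) => c t j.1) (by
        intro x y h1 h2
        funext ⟨j, hj⟩
        rcases Finset.mem_insert.1 hj with rfl | hj
        · exact h1
        · exact congrFun h2 ⟨j, hj⟩)
    linarith

lemma HH_fin_eq {Ω E ι α : Type} [MeasurableSpace Ω] {μ : Measure Ω} [IsProbabilityMeasure μ]
    {T : Ω → E} [Fintype E] (hT : ∀ s : Set E, MeasurableSet (T ⁻¹' s)) [Fintype α] [Fintype ι]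
    [DecidableEq ι] (c : E → ι → α)
    (hc : ∑ j, HH μ T (fun t => c t j) ≤ HH μ T c) (s : Finset ι) :
    ∑ j ∈ s, HH μ T (fun t => c t j) ≤ HH μ T (fun t (j : {j // j ∈ s}) => c t j.1) := by
  have h1 := HH_subadd_fin (μ := μ) hT c sᶜ
  have h2 := HH_subadd (μ := μ) hT (fun t (j : {j // j ∈ s}) => c t j.1)
    (fun t (j : {j // j ∈ sᶜ}) => c t j.1) c (by
      intro x y h1 h2
      funext j
      by_cases hj : j ∈ s
      · exact congrFun h1 ⟨j, hj⟩
      · exact congrFun h2 ⟨j, Finset.mem_compl.2 hj⟩)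
  have h3 := Finset.sum_add_sum_compl s (fun j => HH μ T (fun t => c t j))
  linarith

lemma HH_fin_comp {Ω E ι α β : Type} [MeasurableSpace Ω] {μ : Measure Ω} [IsProbabilityMeasure μ]
    {T : Ω → E} [Fintype E] (hT : ∀ s : Set E, MeasurableSet (T ⁻¹' s)) [Fintype α] [Fintype ι]
    [Fintype β]
    [DecidableEq ι] (c : E → ι → α) (f : α → β)
    (hc : ∑ j, HH μ T (fun t => c t j) ≤ HH μ T c) :
    ∑ j, HH μ T (fun t => f (c t j)) ≤ HH μ T (fun t j => f (c t j)) := by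
  -- H(c | f c) ≤ ∑ H(c_j | f c_j), by induction over prefixes
  have key : ∀ s : Finset ι, ∑ j ∈ s, HH μ T (fun t => f (c t j)) + ∑ j ∈ sᶜ, HH μ T (fun t => c t j)
      ≤ HH μ T (fun t => ((fun j : {j // j ∈ s} => f (c t j.1)), (fun j : {j // j ∈ sᶜ} => c t j.1))) := by
    intro s
    induction s using Finset.induction_on with
    | empty =>
      simp only [Finset.sum_empty, Finset.compl_empty, zero_add]
      refine hc.trans (HH_mono hT _ _ ?_)
      intro x y h
      funext j
      exact congrFun (Prod.ext_iff.1 h).2 ⟨j, by simp⟩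
    | insert a s ha ih =>
      rw [Finset.sum_insert ha]
      have e := Finset.sum_erase_add sᶜ (fun j => HH μ T (fun t => c t j)) (Finset.mem_compl.2 ha)
      rw [Finset.compl_insert]
      have := HH_sub (μ := μ) hT
        (fun t => ((fun j : {j // j ∈ insert a s} => f (c t j.1)),
          (fun j : {j // j ∈ sᶜ.erase a} => c t j.1)))
        (fun t => c t a) (fun t => f (c t a))
        (fun t => ((fun j : {j // j ∈ s} => f (c t j.1)), (fun j : {j // j ∈ sᶜ} => c t j.1)))
        (by
          intro x y h
          exact congrFun (Prod.ext_iff.1 h).1 ⟨a, by simp⟩)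
        (by intro x y h; exact congrArg f h)
        (by
          intro x y h h'
          refine Prod.ext ?_ ?_
          · funext j
            exact congrFun (Prod.ext_iff.1 h).1 ⟨j.1, by simp [j.2]⟩
          · funext ⟨j, hj⟩
            by_cases hja : j = a
            · subst hja; exact h'
            · exact congrFun (Prod.ext_iff.1 h).2 ⟨j, by
                rw [Finset.mem_erase]; exact ⟨hja, hj⟩⟩)
      linarith
  have := key Finset.univ
  simp only [Finset.compl_univ, Finset.sum_empty, add_zero] at this
  refine this.trans (HH_mono hT _ _ ?_)
  intro x y h
  refine Prod.ext ?_ ?_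
  · funext j
    exact congrFun h j.1
  · funext j
    exact absurd j.2 (by simp)

/-- **Secrecy-leakage converse bound (middle/large key regime)**: under the converse
setup, `I(X̃ⁿ; W | Zⁿ) ≥ ∑ᵢ I(Vᵢ; X̃ᵢ | Zᵢ)`. -/
theorem secrecy_leakage_converse_middle_key
    {𝒳 𝒳t 𝒴 𝒵 𝒲 𝒦 : Type}
    [Fintype 𝒳] [Fintype 𝒳t] [Fintype 𝒴] [Fintype 𝒵] [Fintype 𝒲] [Fintype 𝒦]
    [MeasurableSpace 𝒳] [DiscreteMeasurableSpace 𝒳]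
    [MeasurableSpace 𝒳t] [DiscreteMeasurableSpace 𝒳t]
    [MeasurableSpace 𝒴] [DiscreteMeasurableSpace 𝒴]
    [MeasurableSpace 𝒵] [DiscreteMeasurableSpace 𝒵]
    [MeasurableSpace 𝒲] [DiscreteMeasurableSpace 𝒲]
    [MeasurableSpace 𝒦] [DiscreteMeasurableSpace 𝒦]
    {Ω : Type} [MeasurableSpace Ω] (μ : MeasureTheory.Measure Ω)
    [MeasureTheory.IsProbabilityMeasure μ]
    {n : ℕ} (S : Ω → Fin n → 𝒳t × 𝒳 × 𝒴 × 𝒵) (K : Ω → 𝒦)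
    (hSmeas : Measurable S) (hKmeas : Measurable K)
    (pX : 𝒳 → ℝ) (pXt : 𝒳 → 𝒳t → ℝ) (pYZ : 𝒳 → 𝒴 × 𝒵 → ℝ)
    (hpX0 : ∀ x, 0 ≤ pX x) (hpX1 : ∑ x, pX x = 1)
    (hpXt0 : ∀ x a, 0 ≤ pXt x a) (hpXt1 : ∀ x, ∑ a, pXt x a = 1)
    (hpYZ0 : ∀ x yz, 0 ≤ pYZ x yz) (hpYZ1 : ∀ x, ∑ yz, pYZ x yz = 1)
    (hiid : HasIIDLaw μ S (fun s => pX s.2.1 * pXt s.2.1 s.1 * pYZ s.2.1 s.2.2))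
    (hKunif : UniformRV μ K) (hKind : IndepRV μ K S)
    (enc : (Fin n → 𝒳t) → 𝒦 → 𝒲)
    :
    condMutualInfoRV μ (fun ω => fun j => (S ω j).1)
      (fun ω => enc (fun j => (S ω j).1) (K ω))
      (fun ω => fun j => (S ω j).2.2.2)
    ≥ ∑ i : Fin n,
        condMutualInfoRV μ
          (fun ω => (enc (fun j => (S ω j).1) (K ω),
          (fun j : {j : Fin n // i < j} => (S ω j.1).2.2.1),
          (fun j : {j : Fin n // j.1 < i} => (S ω j.1).2.2.2)))
          (fun ω => (S ω i).1) (fun ω => (S ω i).2.2.2) := by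
  classical
  set T : Ω → (Fin n → 𝒳t × 𝒳 × 𝒴 × 𝒵) × 𝒦 := fun ω => (S ω, K ω) with hTdef
  have hTm : Measurable T := hSmeas.prodMk hKmeas
  have hT : ∀ s : Set ((Fin n → 𝒳t × 𝒳 × 𝒴 × 𝒵) × 𝒦), MeasurableSet (T ⁻¹' s) :=
    fun s => hTm (MeasurableSet.of_discrete)
  have hS : ∀ s : Set (Fin n → 𝒳t × 𝒳 × 𝒴 × 𝒵), MeasurableSet (S ⁻¹' s) :=
    fun s => hSmeas (MeasurableSet.of_discrete)
  have hK : ∀ s : Set 𝒦, MeasurableSet (K ⁻¹' s) :=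
    fun s => hKmeas (MeasurableSet.of_discrete)
  have hp1 : ∑ s : 𝒳t × 𝒳 × 𝒴 × 𝒵, pX s.2.1 * pXt s.2.1 s.1 * pYZ s.2.1 s.2.2 = 1 := by
    rw [Fintype.sum_prod_type]
    have : ∀ a : 𝒳t, ∑ y : 𝒳 × 𝒴 × 𝒵, pX y.1 * pXt y.1 a * pYZ y.1 y.2
        = ∑ x : 𝒳, pX x * pXt x a := by
      intro a
      rw [Fintype.sum_prod_type]
      apply Finset.sum_congr rfl
      intro x _
      simp only [← Finset.mul_sum, hpYZ1, mul_one]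
    simp only [this]
    rw [Finset.sum_comm]
    simp only [← Finset.mul_sum, hpXt1, mul_one, hpX1]
  have hiidH := HH_iid hS _ hp1 hiid
  have hind := ent_indep hK hS hKind
  have hc : ∑ j, HH μ T (fun t => t.1 j) ≤ HH μ T (fun t => t.1) := hiidH.ge
  have hKS : HH μ T (fun t => t.2) + HH μ T (fun t => t.1) ≤ HH μ T (fun t => (t.2, t.1)) := hind.ge
  -- abbreviations
  let w : (Fin n → 𝒳t × 𝒳 × 𝒴 × 𝒵) × 𝒦 → 𝒲 := fun t => enc (fun j => (t.1 j).1) t.2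
  have hXZ := HH_fin_comp hT (fun t => t.1) (fun s => (s.1, s.2.2.2)) hc
  have hZ : HH μ T (fun t j => (t.1 j).2.2.2) ≤ ∑ j, HH μ T (fun t => (t.1 j).2.2.2) := by
    refine le_trans (HH_mono hT _ _ ?_) (HH_subadd_fin hT (fun t j => (t.1 j).2.2.2) Finset.univ)
    intro x y h
    funext j
    exact congrFun h ⟨j, Finset.mem_univ j⟩
  -- block independence
  have hblock : ∀ i : Fin n,
      HH μ T (fun t => (t.2, fun j : {j : Fin n // j ≤ i} => t.1 j.1)) +
        HH μ T (fun t => fun j : {j : Fin n // i < j} => t.1 j.1) ≤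
      HH μ T (fun t => (t.2, t.1)) := by
    intro i
    have a := HH_subadd_fin (μ := μ) hT (fun t => t.1) (Finset.univ.filter (fun j => j ≤ i))
    have b := HH_subadd_fin (μ := μ) hT (fun t => t.1) (Finset.univ.filter (fun j => ¬ j ≤ i))
    have c := Finset.sum_filter_add_sum_filter_not Finset.univ (fun j : Fin n => j ≤ i)
      (fun j => HH μ T (fun t => t.1 j))
    have d := HH_subadd (μ := μ) hT (fun t => t.2)
      (fun t (j : {j // j ∈ Finset.univ.filter (fun j : Fin n => j ≤ i)}) => t.1 j.1)
      (fun t => (t.2, fun j : {j : Fin n // j ≤ i} => t.1 j.1)) (by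
        intro x y h1 h2
        refine Prod.ext h1 ?_
        funext j
        exact congrFun h2 ⟨j.1, by simp [j.2]⟩)
    have e := HH_mono (μ := μ) hT
      (fun t (j : {j // j ∈ Finset.univ.filter (fun j : Fin n => ¬ j ≤ i)}) => t.1 j.1)
      (fun t => fun j : {j : Fin n // i < j} => t.1 j.1) (by
        intro x y h
        funext j
        exact congrFun h ⟨j.1, by simp [j.2]⟩)
    linarith
  let G : ℕ → ℝ := fun k => HH μ T (fun t =>
    ((fun j : {j : Fin n // k ≤ j.1} => (t.1 j.1).1), w t, (fun j => (t.1 j).2.2.2)))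
  have hG0 : G 0 = HH μ T (fun t => ((fun j => (t.1 j).1), w t, (fun j => (t.1 j).2.2.2))) := by
    apply HH_congr hT
    intro x y
    simp only [Prod.mk.injEq, funext_iff, Subtype.forall, Nat.zero_le, true_imp_iff]
  have hGn : G n = HH μ T (fun t => (w t, (fun j => (t.1 j).2.2.2))) := by
    apply HH_congr hT
    intro x y
    simp only [Prod.mk.injEq, funext_iff, Subtype.forall]
    constructor
    · exact fun h => h.2
    · exact fun h => ⟨fun a ha => absurd a.2 (by omega), h⟩
  have htel : ∑ i : Fin n, (G i.1 - G (i.1 + 1)) = G 0 - G n := by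
    rw [Fin.sum_univ_eq_sum_range (fun k => G k - G (k + 1)), Finset.sum_range_sub']
  have hstep : ∀ i : Fin n, G i.1 - G (i.1 + 1) ≤
      HH μ T (fun t => ((w t, (fun j : {j : Fin n // i < j} => (t.1 j.1).2.2.1),
          (fun j : {j : Fin n // j.1 < i} => (t.1 j.1).2.2.2)), (t.1 i).1, (t.1 i).2.2.2))
      - HH μ T (fun t => ((w t, (fun j : {j : Fin n // i < j} => (t.1 j.1).2.2.1),
          (fun j : {j : Fin n // j.1 < i} => (t.1 j.1).2.2.2)), (t.1 i).2.2.2)) := by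
    intro i
    let D := fun t : (Fin n → 𝒳t × 𝒳 × 𝒴 × 𝒵) × 𝒦 => (t.1 i).1
    let Xg := fun (t : (Fin n → 𝒳t × 𝒳 × 𝒴 × 𝒵) × 𝒦) (j : {j : Fin n // i < j}) => (t.1 j.1).1
    let Y := fun (t : (Fin n → 𝒳t × 𝒳 × 𝒴 × 𝒵) × 𝒦) (j : {j : Fin n // i < j}) => (t.1 j.1).2.2.1
    let Zl := fun (t : (Fin n → 𝒳t × 𝒳 × 𝒴 × 𝒵) × 𝒦) (j : {j : Fin n // j ≤ i}) => (t.1 j.1).2.2.2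
    let Xl := fun (t : (Fin n → 𝒳t × 𝒳 × 𝒴 × 𝒵) × 𝒦) (j : {j : Fin n // j ≤ i}) => (t.1 j.1).1
    let L := fun t => (Xl t, Zl t, t.2)
    let Q := fun t => (w t, Zl t, Xg t)
    have hXall : ∀ x y, Xl x = Xl y → Xg x = Xg y → (fun j => (x.1 j).1) = (fun j => (y.1 j).1) := by
      intro x y h1 h2
      funext j
      by_cases hj : j ≤ i
      · exact congrFun h1 ⟨j, hj⟩
      · exact congrFun h2 ⟨j, not_le.1 hj⟩
    have hD : ∀ x y, Xl x = Xl y → D x = D y := fun x y h => congrFun h ⟨i, le_rfl⟩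
    have hw : ∀ x y, L x = L y → Xg x = Xg y → w x = w y := by
      intro x y h1 h2
      simp only [L, Prod.mk.injEq] at h1
      change enc (fun j => (x.1 j).1) x.2 = enc (fun j => (y.1 j).1) y.2
      rw [hXall x y h1.1 h2, h1.2.2]
    -- independence
    have i1 : HH μ T L + HH μ T (fun t => (Y t, Xg t)) ≤ HH μ T (fun t => (L t, Y t, Xg t)) := by
      refine HH_indep hT _ _ _ _ _ _ (hblock i) ?_ ?_ ?_ ?_ ?_
      · intro x y h1 h2
        simp only [Prod.mk.injEq] at h1 ⊢
        refine ⟨h1.1, ?_⟩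
        funext j
        by_cases hj : j ≤ i
        · exact congrFun h1.2 ⟨j, hj⟩
        · exact congrFun h2 ⟨j, not_le.1 hj⟩
      · intro x y h
        simp only [Prod.mk.injEq, L, Xl, Zl, funext_iff] at h ⊢
        exact ⟨fun j => by rw [h.2 j], fun j => by rw [h.2 j], h.1⟩
      · intro x y h
        simp only [Prod.mk.injEq, Y, Xg, funext_iff] at h ⊢
        exact ⟨fun j => by rw [h j], fun j => by rw [h j]⟩
      · intro x y h; exact (Prod.ext_iff.1 h).1
      · intro x y h; exact (Prod.ext_iff.1 h).2
    have i2 : HH μ T (fun t => (L t, Xg t)) ≤ HH μ T L + HH μ T Xg :=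
      HH_subadd hT _ _ _ (by intro x y h1 h2; simp only [h1, h2])
    -- I(L;Y|D,Q)
    have s1 := HH_sub (μ := μ) hT (fun t => (L t, Xg t)) (fun t => (D t, Y t, Q t))
      (fun t => (D t, Q t)) (fun t => (L t, Y t, Xg t))
      (by
        intro x y h
        simp only [Prod.mk.injEq] at h
        have h1 := hw x y h.1 h.2
        have h2 := hD x y (Prod.ext_iff.1 h.1).1
        have h3 : Zl x = Zl y := (Prod.ext_iff.1 (Prod.ext_iff.1 h.1).2).1
        simp only [Q, h1, h2, h3, h.2])
      (by
        intro x y h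
        simp only [Prod.mk.injEq] at h ⊢
        exact ⟨h.1, h.2.2⟩)
      (by
        intro x y h h'
        simp only [Prod.mk.injEq] at h h' ⊢
        exact ⟨h.1, h'.2.1, h.2⟩)
    have s2 := HH_sub (μ := μ) hT (fun t => (Y t, Xg t)) Q Xg (fun t => (Y t, Q t))
      (by intro x y h; exact (Prod.ext_iff.1 h).2)
      (by intro x y h; exact (Prod.ext_iff.1 (Prod.ext_iff.1 h).2).2)
      (by
        intro x y h h'
        simp only [Prod.mk.injEq] at h ⊢
        exact ⟨h.1, h'⟩)
    have hZl : ∀ x y : (Fin n → 𝒳t × 𝒳 × 𝒴 × 𝒵) × 𝒦,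
      (∀ j : {j : Fin n // j.1 < i}, (x.1 j.1).2.2.2 = (y.1 j.1).2.2.2) →
      (x.1 i).2.2.2 = (y.1 i).2.2.2 → Zl x = Zl y := by
      intro x y h1 h2
      funext ⟨j, hj⟩
      rcases hj.lt_or_eq with hj | rfl
      · exact h1 ⟨j, hj⟩
      · exact h2
    -- conditioning on X̃_{>i}
    have s3 := HH_sub (μ := μ) hT
      (fun t => ((w t, (fun j : {j : Fin n // i < j} => (t.1 j.1).2.2.1),
          (fun j : {j : Fin n // j.1 < i} => (t.1 j.1).2.2.2)), (t.1 i).1, (t.1 i).2.2.2))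
      (fun t => (Y t, Q t))
      (fun t => ((w t, (fun j : {j : Fin n // i < j} => (t.1 j.1).2.2.1),
          (fun j : {j : Fin n // j.1 < i} => (t.1 j.1).2.2.2)), (t.1 i).2.2.2))
      (fun t => (D t, Y t, Q t))
      (by
        intro x y h
        simp only [Prod.mk.injEq] at h ⊢
        exact ⟨h.1, h.2.2⟩)
      (by
        intro x y h
        simp only [Prod.mk.injEq, Q] at h ⊢
        refine ⟨⟨h.2.1, h.1, ?_⟩, congrFun h.2.2.1 ⟨i, le_rfl⟩⟩
        funext j
        exact congrFun h.2.2.1 ⟨j.1, le_of_lt j.2⟩)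
      (by
        intro x y h h'
        simp only [Prod.mk.injEq] at h h' ⊢
        exact ⟨h.2.1, h'⟩)
    -- conditioning on Z_{>i}
    have s4 := HH_sub (μ := μ) hT (fun t => (D t, Q t))
      (fun t => ((fun j : {j : Fin n // i.1 + 1 ≤ j.1} => (t.1 j.1).1), w t, (fun j => (t.1 j).2.2.2)))
      Q
      (fun t => ((fun j : {j : Fin n // i.1 ≤ j.1} => (t.1 j.1).1), w t, (fun j => (t.1 j).2.2.2)))
      (by intro x y h; exact (Prod.ext_iff.1 h).2)
      (by
        intro x y h
        simp only [Prod.mk.injEq, Q] at h ⊢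
        refine ⟨h.2.1, ?_, ?_⟩
        · funext j; exact congrFun h.2.2 j.1
        · funext j; exact congrFun h.1 ⟨j.1, j.2⟩)
      (by
        intro x y h h'
        simp only [Prod.mk.injEq] at h h' ⊢
        refine ⟨?_, h'.2⟩
        funext ⟨j, hj⟩
        by_cases hji : j = i
        · subst hji; exact h.1
        · exact congrFun h'.1 ⟨j, by
            have : j.1 ≠ i.1 := fun h => hji (Fin.ext h)
            omega⟩)
    change HH μ T Q + G i.1 ≤ _ + G (i.1 + 1) at s4
    linarith
  have hsum := Finset.sum_le_sum (fun i (_ : i ∈ Finset.univ) => hstep i)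
  rw [htel, hG0, hGn, Finset.sum_sub_distrib] at hsum
  have hXZ' : HH μ T (fun t j => ((t.1 j).1, (t.1 j).2.2.2)) =
      HH μ T (fun t => ((fun j => (t.1 j).1), (fun j => (t.1 j).2.2.2))) := by
    apply HH_congr hT
    intro x y
    simp only [Prod.mk.injEq, funext_iff, forall_and]
  rw [hXZ'] at hXZ
  have goal' : ∑ i : Fin n, (HH μ T (fun t => ((w t, (fun j : {j : Fin n // i < j} => (t.1 j.1).2.2.1),
          (fun j : {j : Fin n // j.1 < i} => (t.1 j.1).2.2.2)), (t.1 i).2.2.2))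
        + HH μ T (fun t => ((t.1 i).1, (t.1 i).2.2.2)) - HH μ T (fun t => (t.1 i).2.2.2)
        - HH μ T (fun t => ((w t, (fun j : {j : Fin n // i < j} => (t.1 j.1).2.2.1),
          (fun j : {j : Fin n // j.1 < i} => (t.1 j.1).2.2.2)), (t.1 i).1, (t.1 i).2.2.2)))
      ≤ HH μ T (fun t => ((fun j => (t.1 j).1), (fun j => (t.1 j).2.2.2)))
        + HH μ T (fun t => (w t, (fun j => (t.1 j).2.2.2)))
        - HH μ T (fun t j => (t.1 j).2.2.2)
        - HH μ T (fun t => ((fun j => (t.1 j).1), w t, (fun j => (t.1 j).2.2.2))) := by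
    rw [Finset.sum_sub_distrib, Finset.sum_sub_distrib, Finset.sum_add_distrib]
    linarith
  exact goal'
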